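/- Let a countable amenable group G act by homeomorphisms on a zero-dimensional compact metric space X and let A, B ⊆ X be disjoint clopen sets. Then sup_H inf_{μ∈M_H(X)} (μ(B) − μ(A)) = sup_{H'} inf_{μ∈M_{H'}(X)} (μ(B) − μ(A)) = inf_{μ∈M_G(X)} (μ(B) − μ(A)), where H ranges over all finitely generated subgroups of G, H' ranges over all subgroups of G, and M_H(X) denotes the set of Borel probability measures on X invariant under the restricted action of H. -/

import Mathlib

/-!
STATEMENT 12 (Lemma `supinf` of the paper):
For an action of a countable amenable group `G` on a zero-dimensional compact metric
space `X` and disjoint clopen `A, B ⊆ X`: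
`sup_H inf_{μ ∈ M_H(X)} (μ(B) − μ(A)) = sup_{H'} inf_{μ ∈ M_{H'}(X)} (μ(B) − μ(A))
  = inf_{μ ∈ M_G(X)} (μ(B) − μ(A))`,
`H` ranging over finitely generated subgroups, `H'` over all subgroups of `G`.
-/

open Filter Topology Pointwise MeasureTheory

def IsFolner {G : Type*} [Group G] (F : ℕ → Finset G) : Prop :=
  (∀ n, (F n).Nonempty) ∧
  ∀ g : G, Tendsto
    (fun n => (((({g} : Set G) * (F n : Set G)) ∩ (F n : Set G)).ncard : ℝ) / (F n).card)
    atTop (𝓝 1)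

/-- `inf_{μ ∈ M_H(X)} (μ(B) − μ(A))`, the infimum over all Borel probability measures on
`X` invariant under the restricted action of the subgroup `H`. -/
noncomputable def subgroupAdv {G : Type*} [Group G] (X : Type*) [TopologicalSpace X]
    [MeasurableSpace X] [MulAction G X] (H : Subgroup G) (A B : Set X) : ℝ :=
  ⨅ μ : {μ : Measure X // IsProbabilityMeasure μ ∧
      ∀ g ∈ H, ∀ s : Set X, μ ((fun x => g • x) ⁻¹' s) = μ s},
    ((μ.1 B).toReal - (μ.1 A).toReal)

/-!
Borel probability measures on `X` form a compact Hausdorff space in the weak topology. In it the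
`H`-invariant measures form a closed set `M_H`, which shrinks as `H` grows, and
`μ ↦ μ(B) − μ(A)` is lower semicontinuous when `B` is open and `A` is closed. For a directed
family of nonempty closed sets in a compact space, the supremum of the infima of a lower
semicontinuous function is its infimum over the intersection: the sublevel set at the supremum
meets every member of the family in a nonempty closed set, and by compactness these have a common
point. This applies both to all subgroups and to the finitely generated ones, since each of these
directed families has union `G` and so `⋂ M_H = M_G`. Amenability gives `M_G ≠ ∅`: any weak
limit point of the averages of point masses along an orbit over a Følner sequence is invariant.
-/

section Minimax

variable {K α ι : Type*} [TopologicalSpace K] [CompactSpace K]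
  [ConditionallyCompleteLinearOrder α]

theorem iSup_iInf_eq_iInf_iInter_of_directed [Nonempty ι] {C : ι → Set K} {f : K → α}
    (hf : LowerSemicontinuous f) (hdir : Directed (· ⊇ ·) C) (hclosed : ∀ i, IsClosed (C i))
    (hne : ∀ i, (C i).Nonempty) :
    ⨆ i, ⨅ x : C i, f x = ⨅ x : ⋂ i, C i, f x := by
  have hbdd (s : Set K) : BddBelow (f '' s) :=
    ((hf.lowerSemicontinuousOn _).bddBelow_of_isCompact isCompact_univ).mono
      (Set.image_mono s.subset_univ)
  have : Nonempty ↥(⋂ i, C i) :=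
    (IsCompact.nonempty_iInter_of_directed_nonempty_isCompact_isClosed C hdir hne
      (fun i => (hclosed i).isCompact) hclosed).to_subtype
  have hle (i : ι) : ⨅ x : C i, f x ≤ ⨅ x : ⋂ i, C i, f x :=
    le_ciInf fun x => ciInf_set_le (hbdd _) (Set.mem_iInter.1 x.2 i)
  refine le_antisymm (ciSup_le hle) ?_
  set S := ⨆ i, ⨅ x : C i, f x
  have hsublevel_ne (i : ι) : (C i ∩ f ⁻¹' Set.Iic S).Nonempty := by
    obtain ⟨x, hx, hmin⟩ :=
      (hf.lowerSemicontinuousOn (C i)).exists_isMinOn (hne i) (hclosed i).isCompact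
    refine ⟨x, hx, ?_⟩
    calc f x = ⨅ y : C i, f y := (hmin.iInf_eq hx).symm
      _ ≤ S := le_ciSup (f := fun i => ⨅ y : C i, f y) ⟨_, Set.forall_mem_range.2 hle⟩ i
  have hsublevel_closed (i : ι) : IsClosed (C i ∩ f ⁻¹' Set.Iic S) :=
    (hclosed i).inter (hf.isClosed_preimage S)
  obtain ⟨y, hy⟩ := IsCompact.nonempty_iInter_of_directed_nonempty_isCompact_isClosed
    (fun i => C i ∩ f ⁻¹' Set.Iic S)
    (hdir.mono_comp _ (g := (· ∩ f ⁻¹' Set.Iic S)) fun _ _ h => Set.inter_subset_inter_left _ h)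
    hsublevel_ne (fun i => (hsublevel_closed i).isCompact) hsublevel_closed
  rw [Set.mem_iInter] at hy
  exact (ciInf_set_le (hbdd _) (Set.mem_iInter.2 fun i => (hy i).1)).trans
    (hy (Classical.arbitrary ι)).2

end Minimax

section Semicontinuity

variable {X : Type*} [TopologicalSpace X] [HasOuterApproxClosed X] [MeasurableSpace X]
  [OpensMeasurableSpace X] {A B : Set X}

theorem lowerSemicontinuous_measureReal_of_isOpen (hB : IsOpen B) :
    LowerSemicontinuous fun μ : ProbabilityMeasure X => (μ : Measure X).real B := by
  have hlsc : LowerSemicontinuous fun μ : ProbabilityMeasure X => (μ : Measure X) B :=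
    lowerSemicontinuous_iff_le_liminf.2 fun _ =>
      ProbabilityMeasure.le_liminf_measure_open_of_tendsto tendsto_id hB
  -- `ENNReal.toReal` is discontinuous at `∞`, but its truncation at `1` is continuous.
  have htrunc (μ : ProbabilityMeasure X) :
      ENNReal.truncateToReal 1 ((μ : Measure X) B) = (μ : Measure X).real B :=
    ENNReal.truncateToReal_eq_toReal ENNReal.one_ne_top prob_le_one
  simpa only [Function.comp_def, htrunc] using
    (ENNReal.continuous_truncateToReal ENNReal.one_ne_top).comp_lowerSemicontinuous hlsc
      (ENNReal.monotone_truncateToReal ENNReal.one_ne_top)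

theorem lowerSemicontinuous_measureReal_sub (hA : IsClosed A) (hB : IsOpen B) :
    LowerSemicontinuous fun μ : ProbabilityMeasure X =>
      (μ : Measure X).real B - (μ : Measure X).real A := by
  have hcompl (μ : ProbabilityMeasure X) :
      (μ : Measure X).real B + (μ : Measure X).real Aᶜ + -1 =
        (μ : Measure X).real B - (μ : Measure X).real A := by
    rw [probReal_compl_eq_one_sub hA.measurableSet]
    ring
  simpa only [hcompl] using ((lowerSemicontinuous_measureReal_of_isOpen hB).add
    (lowerSemicontinuous_measureReal_of_isOpen hA.isOpen_compl)).add
      (lowerSemicontinuous_const (z := (-1 : ℝ)))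

end Semicontinuity

/-- The probability measures on `X` invariant under every element of `M`, as a subset of the space
of probability measures with the weak topology. For a subgroup `H` of `G`, taken as a type with the
restricted action, this is `M_H(X)`. -/
def invariantProbabilityMeasures (M X : Type*) [SMul M X] [MeasurableSpace X] :
    Set (ProbabilityMeasure X) :=
  {μ | SMulInvariantMeasure M X (μ : Measure X)}

section InvariantMeasures

variable {G X : Type*} [Group G] [MulAction G X] [MeasurableSpace X]

theorem invariantProbabilityMeasures_subset_subgroup (H : Subgroup G) :
    invariantProbabilityMeasures G X ⊆ invariantProbabilityMeasures H X :=
  fun _ hμ => ⟨fun g _ hs => hμ.measure_preimage_smul (g : G) hs⟩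

theorem invariantProbabilityMeasures_subgroup_anti {H K : Subgroup G} (hHK : H ≤ K) :
    invariantProbabilityMeasures K X ⊆ invariantProbabilityMeasures H X :=
  fun _ hμ => ⟨fun g _ hs => hμ.measure_preimage_smul ⟨g, hHK g.2⟩ hs⟩

theorem invariantProbabilityMeasures_iSup_of_directed {ι : Type*} [Nonempty ι]
    {H : ι → Subgroup G} (hdir : Directed (· ≤ ·) H) :
    invariantProbabilityMeasures ↥(⨆ i, H i) X = ⋂ i, invariantProbabilityMeasures (H i) X := by
  refine subset_antisymm
    (Set.subset_iInter fun i => invariantProbabilityMeasures_subgroup_anti (le_iSup H i))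
    fun μ hμ => ⟨fun g s hs => ?_⟩
  obtain ⟨i, hi⟩ := (Subgroup.mem_iSup_of_directed hdir).1 g.2
  exact (Set.mem_iInter.1 hμ i).measure_preimage_smul ⟨g, hi⟩ hs

end InvariantMeasures

theorem isClosed_invariantProbabilityMeasures (M X : Type*) [SMul M X] [TopologicalSpace X]
    [HasOuterApproxClosed X] [MeasurableSpace X] [BorelSpace X] [ContinuousConstSMul M X] :
    IsClosed (invariantProbabilityMeasures M X) := by
  have hfixed : invariantProbabilityMeasures M X = ⋂ g : M, {μ : ProbabilityMeasure X |
      μ.map (measurable_const_smul g).aemeasurable = μ} := by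
    ext μ
    simp only [Set.mem_iInter, Set.mem_ofPred_eq]
    refine ⟨fun hμ g => Subtype.ext ?_, fun hμ => ⟨fun g s hs => ?_⟩⟩
    · have : SMulInvariantMeasure M X (μ : Measure X) := hμ
      exact (measurePreserving_smul g (μ : Measure X)).map_eq
    · rw [← Measure.map_apply (measurable_const_smul g) hs]
      exact congrArg (fun ν : ProbabilityMeasure X => (ν : Measure X) s) (hμ g)
  rw [hfixed]
  exact isClosed_iInter fun g =>
    isClosed_eq (ProbabilityMeasure.continuous_map (continuous_const_smul g)) continuous_id

section Folner

variable {G : Type*} [Group G] {E : Type*} [SeminormedAddCommGroup E]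

theorem norm_sum_sub_sum_le_card_sdiff {ι : Type*} [DecidableEq ι] {s t : Finset ι} {φ : ι → E}
    {C : ℝ} (hφ : ∀ i, ‖φ i‖ ≤ C) :
    ‖∑ i ∈ s, φ i - ∑ i ∈ t, φ i‖ ≤ ((s \ t).card + (t \ s).card) * C := by
  have hsum (u : Finset ι) : ‖∑ i ∈ u, φ i‖ ≤ u.card * C := by
    simpa only [Finset.sum_const, nsmul_eq_mul] using norm_sum_le_of_le u fun i _ => hφ i
  calc ‖∑ i ∈ s, φ i - ∑ i ∈ t, φ i‖
      = ‖∑ i ∈ s \ t, φ i - ∑ i ∈ t \ s, φ i‖ := by rw [Finset.sum_sdiff_sub_sum_sdiff]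
    _ ≤ ‖∑ i ∈ s \ t, φ i‖ + ‖∑ i ∈ t \ s, φ i‖ := norm_sub_le _ _
    _ ≤ (s \ t).card * C + (t \ s).card * C := add_le_add (hsum _) (hsum _)
    _ = ((s \ t).card + (t \ s).card) * C := by ring

theorem IsFolner.tendsto_card_smul_sdiff_div [DecidableEq G] {F : ℕ → Finset G} (hF : IsFolner F)
    (h : G) : Tendsto (fun n => ((h • F n \ F n).card : ℝ) / (F n).card) atTop (𝓝 0) := by
  have hcard (n : ℕ) : ((h • F n \ F n).card : ℝ) / (F n).card =
      1 - ((({h} : Set G) * (F n : Set G)) ∩ (F n : Set G)).ncard / (F n).card := by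
    have hinter : (({h} : Set G) * (F n : Set G)) ∩ (F n : Set G) = ↑(h • F n ∩ F n) := by
      rw [Finset.coe_inter, Finset.coe_smul_finset, ← Set.singleton_smul, smul_eq_mul]
    have hsplit : ((h • F n ∩ F n).card : ℝ) + (h • F n \ F n).card = (F n).card := by
      exact_mod_cast (Finset.card_inter_add_card_sdiff _ _).trans (Finset.card_smul_finset h (F n))
    have hpos : ((F n).card : ℝ) ≠ 0 := Nat.cast_ne_zero.2 (hF.1 n).card_ne_zero
    rw [hinter, Set.ncard_coe_finset, eq_sub_iff_add_eq, ← add_div, add_comm, hsplit,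
      div_self hpos]
  simpa only [hcard, sub_self] using (hF.2 h).const_sub 1

theorem IsFolner.tendsto_average_mul_left_sub [NormedSpace ℝ E] {F : ℕ → Finset G}
    (hF : IsFolner F) {φ : G → E} {C : ℝ} (hφ : ∀ g, ‖φ g‖ ≤ C) (h : G) :
    Tendsto (fun n => ((F n).card : ℝ)⁻¹ • ∑ g ∈ F n, φ (h * g) -
      ((F n).card : ℝ)⁻¹ • ∑ g ∈ F n, φ g) atTop (𝓝 0) := by
  classical
  have hbound (n : ℕ) : ‖((F n).card : ℝ)⁻¹ • ∑ g ∈ F n, φ (h * g) -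
      ((F n).card : ℝ)⁻¹ • ∑ g ∈ F n, φ g‖ ≤
        ((h • F n \ F n).card : ℝ) / (F n).card * (2 * C) := by
    have htranslate : ∑ g ∈ F n, φ (h * g) = ∑ g ∈ h • F n, φ g :=
      (Finset.sum_image (mul_right_injective h).injOn).symm
    have hcomm : (F n \ h • F n).card = (h • F n \ F n).card :=
      Finset.card_sdiff_comm (Finset.card_smul_finset h (F n)).symm
    rw [htranslate, ← smul_sub, norm_smul, norm_inv, Real.norm_natCast]
    calc ((F n).card : ℝ)⁻¹ * ‖∑ g ∈ h • F n, φ g - ∑ g ∈ F n, φ g‖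
        ≤ ((F n).card : ℝ)⁻¹ * (((h • F n \ F n).card + (F n \ h • F n).card) * C) := by
          gcongr
          exact norm_sum_sub_sum_le_card_sdiff hφ
      _ = ((h • F n \ F n).card : ℝ) / (F n).card * (2 * C) := by
          rw [hcomm]
          ring
  refine squeeze_zero_norm hbound ?_
  simpa only [zero_mul] using (hF.tendsto_card_smul_sdiff_div h).mul_const (2 * C)

end Folner

/-- The uniform distribution on the points `u i`, `i ∈ s`, counted with multiplicity. Applied to an
orbit map and the sets of a Følner sequence, it gives measures that are asymptotically invariant. -/
noncomputable def empiricalMeasure {ι X : Type*} [MeasurableSpace X] (s : Finset ι)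
    (hs : s.Nonempty) (u : ι → X) : ProbabilityMeasure X :=
  ⟨(s.card : ENNReal)⁻¹ • ∑ i ∈ s, Measure.dirac (u i), ⟨by
    simp [ENNReal.inv_mul_cancel (Nat.cast_ne_zero.2 hs.card_ne_zero)]⟩⟩

theorem integral_empiricalMeasure {ι X E : Type*} [MeasurableSpace X] [MeasurableSingletonClass X]
    [NormedAddCommGroup E] [NormedSpace ℝ E] [CompleteSpace E] {s : Finset ι} (hs : s.Nonempty)
    (u : ι → X) (f : X → E) :
    ∫ x, f x ∂(empiricalMeasure s hs u : Measure X) = (s.card : ℝ)⁻¹ • ∑ i ∈ s, f (u i) := by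
  rw [empiricalMeasure, ProbabilityMeasure.coe_mk, integral_smul_measure,
    integral_finsetSum_measure fun i _ => integrable_dirac enorm_lt_top]
  simp

theorem map_eq_of_tendsto_of_tendsto_integral_comp_sub {X ι : Type*} [TopologicalSpace X]
    [HasOuterApproxClosed X] [MeasurableSpace X] [BorelSpace X] {L : Filter ι} [L.NeBot]
    {μs : ι → ProbabilityMeasure X} {μ : ProbabilityMeasure X} (hμ : Tendsto μs L (𝓝 μ))
    {T : X → X} (hT : Continuous T)
    (h : ∀ f : BoundedContinuousFunction X ℝ, Tendsto
      (fun i => ∫ x, f (T x) ∂(μs i : Measure X) - ∫ x, f x ∂(μs i : Measure X)) L (𝓝 0)) :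
    (μ : Measure X).map T = μ := by
  have := Measure.isProbabilityMeasure_map (μ := (μ : Measure X)) hT.aemeasurable
  refine ext_of_forall_integral_eq_of_IsFiniteMeasure fun f => ?_
  rw [integral_map hT.aemeasurable f.continuous.aestronglyMeasurable]
  have hlim := ProbabilityMeasure.tendsto_iff_forall_integral_tendsto.1 hμ
  exact sub_eq_zero.1
    (tendsto_nhds_unique ((hlim (f.compContinuous ⟨T, hT⟩)).sub (hlim f)) (h f))

theorem IsFolner.nonempty_invariantProbabilityMeasures {G X : Type*} [Group G]
    [TopologicalSpace X] [CompactSpace X] [T2Space X] [HasOuterApproxClosed X] [MeasurableSpace X]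
    [BorelSpace X] [MulAction G X] [ContinuousConstSMul G X] [Nonempty X] {F : ℕ → Finset G}
    (hF : IsFolner F) : (invariantProbabilityMeasures G X).Nonempty := by
  obtain ⟨x⟩ := ‹Nonempty X›
  let μs (n : ℕ) : ProbabilityMeasure X := empiricalMeasure (F n) (hF.1 n) (· • x)
  let U : Ultrafilter ℕ := Ultrafilter.of atTop
  have hlim : Tendsto μs U (𝓝 (U.map μs).lim) := (U.map μs).le_nhds_lim
  refine ⟨(U.map μs).lim, ((smulInvariantMeasure_tfae G _).out 0 5).2 fun g =>
    map_eq_of_tendsto_of_tendsto_integral_comp_sub hlim (continuous_const_smul g) fun f => ?_⟩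
  have hasymp := hF.tendsto_average_mul_left_sub (fun k => f.norm_coe_le_norm (k • x)) g
  simp only [mul_smul] at hasymp
  simp only [μs, integral_empiricalMeasure]
  exact hasymp.mono_left (Ultrafilter.of_le atTop)

section FinitelyGenerated

variable (G : Type*) [Group G]

theorem directed_subgroup_fg :
    Directed (· ≤ ·) (Subtype.val : {H : Subgroup G // H.FG} → Subgroup G) :=
  fun H K => ⟨⟨H.1 ⊔ K.1, H.2.sup K.2⟩, le_sup_left, le_sup_right⟩

theorem iSup_subgroup_fg_eq_top : ⨆ H : {H : Subgroup G // H.FG}, H.1 = ⊤ := by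
  refine top_unique fun g _ => ?_
  have hfg : (Subgroup.zpowers g).FG :=
    ⟨{g}, by rw [Finset.coe_singleton, Subgroup.zpowers_eq_closure]⟩
  exact le_iSup (fun H : {H : Subgroup G // H.FG} => H.1) ⟨_, hfg⟩ (Subgroup.mem_zpowers g)

end FinitelyGenerated

section SubgroupAdv

variable {G X : Type*} [Group G] [TopologicalSpace X] [MeasurableSpace X] [MulAction G X]
  {A B : Set X}

theorem subgroupAdv_of_isEmpty [IsEmpty X] (H : Subgroup G) : subgroupAdv X H A B = 0 := by
  simp [subgroupAdv, Set.eq_empty_of_isEmpty]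

theorem subgroupAdv_eq_iInf_invariantProbabilityMeasures (H : Subgroup G) :
    subgroupAdv X H A B = ⨅ μ : invariantProbabilityMeasures H X,
      ((μ : Measure X).real B - (μ : Measure X).real A) := by
  let e : {μ : Measure X // IsProbabilityMeasure μ ∧
      ∀ g ∈ H, ∀ s : Set X, μ ((fun x => g • x) ⁻¹' s) = μ s} ≃
        invariantProbabilityMeasures H X :=
    { toFun μ := ⟨⟨μ.1, μ.2.1⟩, ⟨fun g s _ => μ.2.2 g g.2 s⟩⟩
      invFun μ := ⟨μ.1, inferInstance, fun g hg s =>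
        have : SMulInvariantMeasure H X (μ.1 : Measure X) := μ.2
        measure_preimage_smul (μ.1 : Measure X) (⟨g, hg⟩ : H) s⟩ }
  exact e.iInf_congr fun _ => rfl

variable [BorelSpace X] [ContinuousConstSMul G X] [CompactSpace X] [T2Space X]
  [HasOuterApproxClosed X]

theorem iSup_subgroupAdv_of_directed {ι : Type*} [Nonempty ι] {H : ι → Subgroup G}
    (hdir : Directed (· ≤ ·) H) (hne : ∀ i, (invariantProbabilityMeasures (H i) X).Nonempty)
    (hA : IsClosed A) (hB : IsOpen B) :
    ⨆ i, subgroupAdv X (H i) A B = subgroupAdv X (⨆ i, H i) A B := by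
  simp only [subgroupAdv_eq_iInf_invariantProbabilityMeasures]
  rw [invariantProbabilityMeasures_iSup_of_directed hdir]
  have (i : ι) : ContinuousConstSMul (H i) X := ⟨fun g => continuous_const_smul (g : G)⟩
  exact iSup_iInf_eq_iInf_iInter_of_directed (lowerSemicontinuous_measureReal_sub hA hB)
    (fun i j => (hdir i j).imp fun _ hk => ⟨invariantProbabilityMeasures_subgroup_anti hk.1,
      invariantProbabilityMeasures_subgroup_anti hk.2⟩)
    (fun i => isClosed_invariantProbabilityMeasures (H i) X) hne

theorem stmt12_general (hinv : (invariantProbabilityMeasures G X).Nonempty) (hA : IsClosed A)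
    (hB : IsOpen B) :
    (⨆ H : {H : Subgroup G // H.FG}, subgroupAdv X H.1 A B)
      = (⨆ H : Subgroup G, subgroupAdv X H A B) ∧
    (⨆ H : Subgroup G, subgroupAdv X H A B) = subgroupAdv X (⊤ : Subgroup G) A B := by
  have hne (H : Subgroup G) : (invariantProbabilityMeasures H X).Nonempty :=
    hinv.mono (invariantProbabilityMeasures_subset_subgroup H)
  have : Nonempty {H : Subgroup G // H.FG} := ⟨⊥, Subgroup.FG.bot⟩
  have hall : ⨆ H : Subgroup G, subgroupAdv X H A B = subgroupAdv X (⊤ : Subgroup G) A B := by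
    rw [iSup_subgroupAdv_of_directed (H := fun H : Subgroup G => H) directed_id hne hA hB,
      top_unique (le_iSup (fun H : Subgroup G => H) ⊤)]
  have hfg : ⨆ H : {H : Subgroup G // H.FG}, subgroupAdv X H.1 A B =
      subgroupAdv X (⊤ : Subgroup G) A B := by
    rw [iSup_subgroupAdv_of_directed (directed_subgroup_fg G) (fun H => hne H.1) hA hB,
      iSup_subgroup_fg_eq_top]
  exact ⟨hfg.trans hall.symm, hall⟩

end SubgroupAdv

theorem stmt12 (G : Type*) [Group G] [Countable G]
    (X : Type*) [TopologicalSpace X] [CompactSpace X] [TopologicalSpace.MetrizableSpace X]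
    [TotallyDisconnectedSpace X] [MeasurableSpace X] [BorelSpace X]
    [MulAction G X] [ContinuousConstSMul G X]
    (hAmen : ∃ Fs : ℕ → Finset G, IsFolner Fs)
    (A B : Set X) (hA : IsClopen A) (hB : IsClopen B) (hAB : Disjoint A B) :
    (⨆ H : {H : Subgroup G // H.FG}, subgroupAdv X H.1 A B)
      = (⨆ H : Subgroup G, subgroupAdv X H A B) ∧
    (⨆ H : Subgroup G, subgroupAdv X H A B) = subgroupAdv X (⊤ : Subgroup G) A B := by
  obtain ⟨F, hF⟩ := hAmen
  rcases isEmpty_or_nonempty X with _ | _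
  · simp only [subgroupAdv_of_isEmpty, Real.iSup_const_zero, and_self]
  · exact stmt12_general hF.nonempty_invariantProbabilityMeasures hA.isClosed hB.isOpen
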